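/- Let $1 < p < \infty$ and $m, \beta \in \mathbb{R}$. There exist constants $C > 0$ and $\varepsilon_0 > 0$ such that for every $u \in W^{2,p}_{loc}((0,\infty))$ and every $0 < \varepsilon < \varepsilon_0$: $\|y^{\beta-1} u'\|_{L^p((0,\infty); y^m dy)} \le C\left(\varepsilon \|y^\beta u''\|_{L^p((0,\infty); y^m dy)} + \frac{1}{\varepsilon}\|y^{\beta-2} u\|_{L^p((0,\infty); y^m dy)}\right)$. -/

import Mathlib

open MeasureTheory Filter
open scoped ENNReal

/-- The weighted measure `y^m dy` on `(0,∞)`. -/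
noncomputable def wm (m : ℝ) : Measure ℝ :=
  (volume.restrict (Set.Ioi 0)).withDensity fun y => ENNReal.ofReal (y ^ m)
lemma aux_ftc (f f' f'' : ℝ → ℝ) (h1 : ∀ t ∈ Set.Icc (0:ℝ) 1, HasDerivAt f (f' t) t)
    (h2 : ∀ t ∈ Set.Icc (0:ℝ) 1, HasDerivAt f' (f'' t) t)
    (hm : AEStronglyMeasurable f'' (volume.restrict (Set.Ioc 0 1))) :
    ‖f' 0‖ₑ ≤ ‖f 1‖ₑ + ‖f 0‖ₑ + ∫⁻ t in Set.Ioc (0:ℝ) 1, ‖f'' t‖ₑ := by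
  by_cases hfin : ∫⁻ t in Set.Ioc (0:ℝ) 1, ‖f'' t‖ₑ = ∞
  · simp [hfin]
  have hint : IntegrableOn f'' (Set.Ioc 0 1) volume := ⟨hm, lt_top_iff_ne_top.2 hfin⟩
  obtain ⟨c, hc, hc'⟩ := exists_hasDerivAt_eq_slope f f' zero_lt_one
    (fun t ht => (h1 t ht).continuousAt.continuousWithinAt)
    (fun t ht => h1 t (Set.Ioo_subset_Icc_self ht))
  have hsub : Set.Ioc 0 c ⊆ Set.Ioc (0:ℝ) 1 := Set.Ioc_subset_Ioc_right hc.2.le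
  have hI := intervalIntegral.integral_eq_sub_of_hasDerivAt (a := 0) (b := c) (f := f') (f' := f'')
    (fun t ht => by
      rw [Set.uIcc_of_le hc.1.le] at ht
      exact h2 t ⟨ht.1, ht.2.trans hc.2.le⟩)
    ((intervalIntegrable_iff_integrableOn_Ioc_of_le hc.1.le).2 (hint.mono_set hsub))
  rw [intervalIntegral.integral_of_le hc.1.le] at hI
  have e : f' 0 = (f 1 - f 0) - ∫ t in Set.Ioc 0 c, f'' t := by
    rw [hI, hc']; ring
  rw [e]
  refine (enorm_sub_le).trans (add_le_add enorm_sub_le ?_)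
  refine (enorm_integral_le_lintegral_enorm _).trans ?_
  exact lintegral_mono_set hsub

lemma aux_dil (m l : ℝ) (hl : 1 ≤ l) (hl2 : l ≤ 2) (f : ℝ → ℝ≥0∞) (hf : Measurable f) :
    ∫⁻ y, f (l * y) ∂(wm m) ≤ ENNReal.ofReal (2 ^ |m|) * ∫⁻ y, f y ∂(wm m) := by
  have hl0 : 0 < l := by linarith
  have hmm : Measurable fun y : ℝ => ENNReal.ofReal (y ^ m) := by fun_prop
  have key : ∀ g : ℝ → ℝ≥0∞, Measurable g → ∫⁻ y, g y ∂(wm m) =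
      ∫⁻ y, (Set.Ioi (0:ℝ)).indicator (fun y => ENNReal.ofReal (y ^ m) * g y) y := by
    intro g hg
    rw [wm, lintegral_withDensity_eq_lintegral_mul _ hmm hg, lintegral_indicator measurableSet_Ioi]
    rfl
  rw [key _ hf, key (fun y => f (l * y)) (hf.comp (measurable_const_mul l))]
  set F := (Set.Ioi (0:ℝ)).indicator (fun y => ENNReal.ofReal (y ^ m) * f y) with hF
  have hFm : Measurable F := (hmm.mul hf).indicator measurableSet_Ioi
  have hs : ∫⁻ y, F (l * y) ≤ ∫⁻ y, F y := by
    have := Real.map_volume_mul_left hl0.ne'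
    rw [← lintegral_map hFm (measurable_const_mul l), this, lintegral_smul_measure]
    rw [smul_eq_mul]
    refine mul_le_of_le_one_left' ?_
    rw [abs_of_pos (inv_pos.2 hl0)]
    simpa using inv_le_one_of_one_le₀ hl
  refine le_trans ?_ (mul_le_mul_right hs _)
  have hFl : Measurable fun y => F (l * y) := hFm.comp (measurable_const_mul l)
  rw [← lintegral_const_mul _ hFl]
  refine lintegral_mono fun y => ?_
  by_cases hy : 0 < y
  · have hly : 0 < l * y := by positivity
    simp only [hF, Set.indicator, Set.mem_Ioi, hy, hly, if_true, Function.comp]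
    rw [← mul_assoc, ← ENNReal.ofReal_mul (by positivity)]
    gcongr
    rw [Real.mul_rpow hl0.le hy.le, ← mul_assoc]
    refine le_mul_of_one_le_left (by positivity) ?_
    calc (1:ℝ) ≤ l ^ (|m| + m) := Real.one_le_rpow hl (by linarith [neg_abs_le m])
      _ = l ^ |m| * l ^ m := Real.rpow_add hl0 _ _
      _ ≤ _ := by gcongr
  · simp [Set.indicator, hy]

lemma aux_jensen (p : ℝ) (hp : 1 < p) (f : ℝ → ℝ≥0∞) (hf : Measurable f) :
    (∫⁻ t in Set.Ioc (0:ℝ) 1, f t) ^ p ≤ ∫⁻ t in Set.Ioc (0:ℝ) 1, f t ^ p := by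
  have hpq := Real.HolderConjugate.conjExponent hp
  have := ENNReal.lintegral_mul_le_Lp_mul_Lq (volume.restrict (Set.Ioc (0:ℝ) 1)) hpq
    hf.aemeasurable (g := fun _ => 1) aemeasurable_const
  simp at this
  have h2 := ENNReal.rpow_le_rpow this (z := p) (by linarith)
  rwa [← ENNReal.rpow_mul, inv_mul_cancel₀ (by linarith), ENNReal.rpow_one] at h2

lemma aux_scale (b l y x : ℝ) (hl : 1 ≤ l) (hl2 : l ≤ 2) (hy : 0 < y) :
    ‖y ^ b * x‖ₑ ≤ ENNReal.ofReal (2 ^ |b|) * ‖(l * y) ^ b * x‖ₑ := by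
  have hl0 : 0 < l := by linarith
  rw [enorm_mul, enorm_mul, ← mul_assoc]
  gcongr
  rw [Real.enorm_eq_ofReal (by positivity), Real.enorm_eq_ofReal (by positivity),
    ← ENNReal.ofReal_mul (by positivity)]
  gcongr
  rw [Real.mul_rpow hl0.le hy.le, ← mul_assoc]
  refine le_mul_of_one_le_left (by positivity) ?_
  calc (1:ℝ) ≤ l ^ (|b| + b) := Real.one_le_rpow hl (by linarith [neg_abs_le b])
    _ = l ^ |b| * l ^ b := Real.rpow_add hl0 _ _
    _ ≤ _ := by gcongr

lemma aux_pt (β ε y : ℝ) (hε : 0 < ε) (hε1 : ε < 1) (hy : 0 < y) (u u' g : ℝ → ℝ)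
    (hg : Measurable g)
    (h1 : ∀ y, 0 < y → HasDerivAt u (u' y) y) (h2 : ∀ y, 0 < y → HasDerivAt u' (g y) y) :
    ‖y ^ (β - 1) * u' y‖ₑ ≤
      ENNReal.ofReal (1 / ε) * (ENNReal.ofReal (2 ^ |β - 2|) *
        ‖((1 + ε) * y) ^ (β - 2) * u ((1 + ε) * y)‖ₑ + ‖y ^ (β - 2) * u y‖ₑ) +
      ENNReal.ofReal ε * (ENNReal.ofReal (2 ^ |β|) *
        ∫⁻ t in Set.Ioc (0:ℝ) 1, ‖((1 + ε * t) * y) ^ β * g ((1 + ε * t) * y)‖ₑ) := by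
  have hd : ∀ t : ℝ, HasDerivAt (fun t : ℝ => (1 + ε * t) * y) (ε * y) t := fun t => by
    simpa using (((hasDerivAt_id t).const_mul ε).const_add 1).mul_const y
  have hpos : ∀ t ∈ Set.Icc (0:ℝ) 1, 0 < (1 + ε * t) * y := fun t ht => by
    have := mul_nonneg hε.le ht.1
    positivity
  have hmg : Measurable fun t : ℝ => g ((1 + ε * t) * y) := hg.comp (by fun_prop)
  have key := aux_ftc (fun t => u ((1 + ε * t) * y)) (fun t => u' ((1 + ε * t) * y) * (ε * y))
    (fun t => g ((1 + ε * t) * y) * (ε * y) * (ε * y))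
    (fun t ht => (h1 _ (hpos t ht)).comp t (hd t))
    (fun t ht => ((h2 _ (hpos t ht)).comp t (hd t)).mul_const _)
    ((hmg.mul_const _).mul_const _).aestronglyMeasurable
  simp only [mul_zero, mul_one, add_zero, one_mul] at key
  have e1 : y ^ (β - 1) * u' y = (1 / ε * y ^ (β - 2)) * (u' y * (ε * y)) := by
    rw [show β - 1 = (β - 2) + 1 by ring, Real.rpow_add hy, Real.rpow_one]
    field_simp
  have eε : ENNReal.ofReal (1 / ε) = ‖1 / ε‖ₑ := (Real.enorm_eq_ofReal (by positivity)).symm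
  have eε' : ENNReal.ofReal ε = ‖ε‖ₑ := (Real.enorm_eq_ofReal (by positivity)).symm
  rw [e1, enorm_mul]
  refine (mul_le_mul_right key _).trans ?_
  rw [mul_add]
  refine add_le_add ?_ ?_
  · rw [enorm_mul, ← eε, mul_assoc]
    gcongr
    rw [mul_add, ← enorm_mul, ← enorm_mul]
    gcongr
    exact aux_scale _ _ _ _ (by linarith) (by linarith) hy
  · rw [← lintegral_const_mul _ (by fun_prop), eε', ← mul_assoc, ← lintegral_const_mul _ (by fun_prop)]
    refine setLIntegral_mono' measurableSet_Ioc fun t ht => ?_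
    have hs := aux_scale β (1 + ε * t) y (g ((1 + ε * t) * y))
      (by nlinarith [ht.1, ht.2]) (by nlinarith [ht.1, ht.2]) hy
    rw [mul_assoc (‖ε‖ₑ)]
    refine le_trans (le_of_eq ?_) (mul_le_mul_right hs _)
    rw [← enorm_mul, ← enorm_mul]
    congr 1
    rw [show y ^ β = y ^ (β - 2) * y ^ 2 by
      rw [← Real.rpow_natCast, ← Real.rpow_add hy]; norm_num]
    field_simp

lemma aux_avg (p m ε : ℝ) (hp : 1 < p) (hε : 0 < ε) (hε1 : ε < 1) (W : ℝ → ℝ≥0∞)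
    (hW : Measurable W) :
    ∫⁻ y, (∫⁻ t in Set.Ioc (0:ℝ) 1, W ((1 + ε * t) * y)) ^ p ∂(wm m) ≤
      ENNReal.ofReal (2 ^ |m|) * ∫⁻ y, W y ^ p ∂(wm m) := by
  have : SFinite (wm m) := by unfold wm; infer_instance
  calc _ ≤ ∫⁻ y, (∫⁻ t in Set.Ioc (0:ℝ) 1, W ((1 + ε * t) * y) ^ p) ∂(wm m) :=
        lintegral_mono fun y => aux_jensen p hp _ (hW.comp (by fun_prop))
    _ = ∫⁻ t in Set.Ioc (0:ℝ) 1, ∫⁻ y, W ((1 + ε * t) * y) ^ p ∂(wm m) := by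
        refine lintegral_lintegral_swap (Measurable.aemeasurable ?_)
        exact (hW.comp (by fun_prop : Measurable fun z : ℝ × ℝ => (1 + ε * z.2) * z.1)).pow_const p
    _ ≤ ∫⁻ t in Set.Ioc (0:ℝ) 1, ENNReal.ofReal (2 ^ |m|) * ∫⁻ y, W y ^ p ∂(wm m) := by
        refine setLIntegral_mono' measurableSet_Ioc fun t ht => ?_
        exact aux_dil m (1 + ε * t) (by nlinarith [ht.1, ht.2]) (by nlinarith [ht.1, ht.2])
          (fun y => W y ^ p) (hW.pow_const p)
    _ = _ := by simp

lemma aux_core (p m ε : ℝ) (hp : 1 < p) (hε : 0 < ε) (hε1 : ε < 1) (A V W : ℝ → ℝ≥0∞)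
    (K L : ℝ≥0∞) (hV : Measurable V) (hW : Measurable W)
    (h : ∀ y, 0 < y → A y ≤ ENNReal.ofReal (1 / ε) * (K * V ((1 + ε) * y) + V y) +
      ENNReal.ofReal ε * (L * ∫⁻ t in Set.Ioc (0:ℝ) 1, W ((1 + ε * t) * y))) :
    (∫⁻ y, A y ^ p ∂(wm m)) ^ (1 / p) ≤
      ENNReal.ofReal (1 / ε) * (K * (ENNReal.ofReal (2 ^ |m|) ^ (1 / p) *
        (∫⁻ y, V y ^ p ∂(wm m)) ^ (1 / p)) + (∫⁻ y, V y ^ p ∂(wm m)) ^ (1 / p)) +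
      ENNReal.ofReal ε * (L * (ENNReal.ofReal (2 ^ |m|) ^ (1 / p) *
        (∫⁻ y, W y ^ p ∂(wm m)) ^ (1 / p))) := by
  have hp0 : 0 < p := by linarith
  have hpi : 0 ≤ 1 / p := by positivity
  have hae : ∀ᵐ y ∂(wm m), 0 < y := by
    refine (withDensity_absolutelyContinuous _ _).ae_le ?_
    exact ae_restrict_mem measurableSet_Ioi
  have hc : ∀ (c : ℝ≥0∞) (f : ℝ → ℝ≥0∞), Measurable f →
      (∫⁻ y, (c * f y) ^ p ∂(wm m)) ^ (1 / p) = c * (∫⁻ y, f y ^ p ∂(wm m)) ^ (1 / p) := by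
    intro c f hf
    simp_rw [ENNReal.mul_rpow_of_nonneg _ _ hp0.le]
    rw [lintegral_const_mul _ (hf.pow_const p), ENNReal.mul_rpow_of_nonneg _ _ hpi,
      ← ENNReal.rpow_mul, mul_one_div_cancel hp0.ne', ENNReal.rpow_one]
  have hVd : Measurable fun y => V ((1 + ε) * y) := hV.comp (by fun_prop)
  have hWd : Measurable fun y => ∫⁻ t in Set.Ioc (0:ℝ) 1, W ((1 + ε * t) * y) :=
    Measurable.lintegral_prod_right'
      (f := fun z : ℝ × ℝ => W ((1 + ε * z.2) * z.1)) (hW.comp (by fun_prop))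
  have h0 : (∫⁻ y, A y ^ p ∂(wm m)) ^ (1 / p) ≤
      (∫⁻ y, (ENNReal.ofReal (1 / ε) * (K * V ((1 + ε) * y) + V y) +
      ENNReal.ofReal ε * (L * ∫⁻ t in Set.Ioc (0:ℝ) 1, W ((1 + ε * t) * y))) ^ p ∂(wm m))
        ^ (1 / p) := by
    refine ENNReal.rpow_le_rpow (lintegral_mono_ae ?_) hpi
    filter_upwards [hae] with y hy
    exact ENNReal.rpow_le_rpow (h y hy) hp0.le
  refine h0.trans ?_
  have hm1 : Measurable fun y => K * V ((1 + ε) * y) + V y := (hVd.const_mul K).add hV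
  refine (ENNReal.lintegral_Lp_add_le
    (f := fun y => ENNReal.ofReal (1 / ε) * (K * V ((1 + ε) * y) + V y))
    (g := fun y => ENNReal.ofReal ε * (L * ∫⁻ t in Set.Ioc (0:ℝ) 1, W ((1 + ε * t) * y)))
    (hm1.const_mul _).aemeasurable ((hWd.const_mul _).const_mul _).aemeasurable hp.le).trans ?_
  rw [hc _ _ hm1, hc _ _ (hWd.const_mul _), hc _ _ hWd]
  gcongr
  · refine (ENNReal.lintegral_Lp_add_le (f := fun y => K * V ((1 + ε) * y)) (g := V)
      (hVd.const_mul _).aemeasurable hV.aemeasurable hp.le).trans ?_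
    rw [hc _ _ hVd]
    gcongr
    rw [← ENNReal.mul_rpow_of_nonneg _ _ hpi]
    gcongr
    exact aux_dil m (1 + ε) (by linarith) (by linarith) (fun y => V y ^ p) (hV.pow_const p)
  · rw [← ENNReal.mul_rpow_of_nonneg _ _ hpi]
    gcongr
    exact aux_avg p m ε hp hε hε1 W hW

theorem stmt10 (p m β : ℝ) (hp : 1 < p) :
    ∃ C > (0 : ℝ), ∃ ε₀ > (0 : ℝ), ∀ u u' u'' : ℝ → ℝ,
      (∀ y, 0 < y → HasDerivAt u (u' y) y) →
      (∀ y, 0 < y → HasDerivAt u' (u'' y) y) →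
      ∀ ε : ℝ, 0 < ε → ε < ε₀ →
        eLpNorm (fun y => y ^ (β - 1) * u' y) (ENNReal.ofReal p) (wm m) ≤
          ENNReal.ofReal C *
            (ENNReal.ofReal ε *
                eLpNorm (fun y => y ^ β * u'' y) (ENNReal.ofReal p) (wm m)
              + ENNReal.ofReal (1 / ε) *
                eLpNorm (fun y => y ^ (β - 2) * u y) (ENNReal.ofReal p) (wm m)) := by
  have hp0 : 0 < p := by linarith
  refine ⟨2 ^ |β - 2| * (2 ^ |m|) ^ (1 / p) + 1 + 2 ^ |β| * (2 ^ |m|) ^ (1 / p), by positivity,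
    1, one_pos, ?_⟩
  intro u u' u'' h1 h2 ε hε hε1
  have hae : ∀ᵐ y ∂(wm m), 0 < y := by
    refine (withDensity_absolutelyContinuous _ _).ae_le ?_
    exact ae_restrict_mem measurableSet_Ioi
  set U := (Set.Ioi (0:ℝ)).indicator u with hU
  have hUeq : ∀ y, 0 < y → U y = u y := fun y hy => Set.indicator_of_mem (Set.mem_Ioi.2 hy) u
  have hUm : Measurable U := by
    have hco : ContinuousOn u (Set.Ioi 0) := fun y hy => (h1 y hy).continuousAt.continuousWithinAt
    have := hco.measurable_piecewise (g := fun _ => (0:ℝ)) continuousOn_const measurableSet_Ioi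
    rw [hU, ← Set.piecewise_eq_indicator]
    exact this
  have hgm : Measurable (deriv u') := measurable_deriv u'
  have hU1 : ∀ y, 0 < y → HasDerivAt U (u' y) y := fun y hy =>
    (h1 y hy).congr_of_eventuallyEq ((eventually_gt_nhds hy).mono hUeq)
  have hU2 : ∀ y, 0 < y → HasDerivAt u' (deriv u' y) y := fun y hy =>
    (h2 y hy).differentiableAt.hasDerivAt
  have e1 : eLpNorm (fun y => y ^ β * u'' y) (ENNReal.ofReal p) (wm m) =
      eLpNorm (fun y => y ^ β * deriv u' y) (ENNReal.ofReal p) (wm m) := by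
    refine eLpNorm_congr_ae ?_
    filter_upwards [hae] with y hy
    rw [(h2 y hy).deriv]
  have e2 : eLpNorm (fun y => y ^ (β - 2) * u y) (ENNReal.ofReal p) (wm m) =
      eLpNorm (fun y => y ^ (β - 2) * U y) (ENNReal.ofReal p) (wm m) := by
    refine eLpNorm_congr_ae ?_
    filter_upwards [hae] with y hy
    rw [hUeq y hy]
  have hN : ∀ f : ℝ → ℝ, eLpNorm f (ENNReal.ofReal p) (wm m) =
      (∫⁻ y, ‖f y‖ₑ ^ p ∂(wm m)) ^ (1 / p) := fun f => by
    rw [eLpNorm_eq_lintegral_rpow_enorm_toReal (by simpa using hp0) ENNReal.ofReal_ne_top,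
      ENNReal.toReal_ofReal hp0.le]
  rw [e1, e2, hN, hN, hN]
  refine (aux_core p m ε hp hε hε1 (fun y => ‖y ^ (β - 1) * u' y‖ₑ)
    (fun y => ‖y ^ (β - 2) * U y‖ₑ) (fun y => ‖y ^ β * deriv u' y‖ₑ)
    (ENNReal.ofReal (2 ^ |β - 2|)) (ENNReal.ofReal (2 ^ |β|)) (by fun_prop) (by fun_prop)
    (fun y hy => aux_pt β ε y hε hε1 hy U u' (deriv u') hgm hU1 hU2)).trans ?_
  rw [ENNReal.ofReal_add (by positivity) (by positivity),
    ENNReal.ofReal_add (by positivity) (by positivity), ENNReal.ofReal_mul (by positivity),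
    ENNReal.ofReal_mul (by positivity), ENNReal.ofReal_one,
    ENNReal.ofReal_rpow_of_pos (by positivity)]
  generalize (∫⁻ y, ‖y ^ (β - 2) * U y‖ₑ ^ p ∂(wm m)) ^ (1 / p) = v
  generalize (∫⁻ y, ‖y ^ β * deriv u' y‖ₑ ^ p ∂(wm m)) ^ (1 / p) = w
  generalize ENNReal.ofReal ((2 ^ |m|) ^ (1 / p)) = D
  generalize ENNReal.ofReal (2 ^ |β - 2|) = K
  generalize ENNReal.ofReal (2 ^ |β|) = L
  generalize ENNReal.ofReal ε = a
  generalize ENNReal.ofReal (1 / ε) = b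
  calc b * (K * (D * v) + v) + a * (L * (D * w))
      ≤ (b * (K * (D * v) + v) + a * (L * (D * w))) + ((K * D + 1) * (a * w) + L * D * (b * v)) :=
        le_self_add
    _ = _ := by ring
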